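/- Let p be a prime and let α ≥ 1. If m ≥ 0 and n ≥ 0 satisfy |m|_w = |n|_w for every nonempty word w of length at most α over the digit alphabet {0,1,…,p−1}, then a_{p^α}(m) · a_p(n) = a_{p^α}(n) · a_p(m); that is, the ratio a_{p^α}(n)/a_p(n) depends only on the numbers of occurrences of subwords of length at most α in the base-p representation of n. -/

import Mathlib

/-- The number of integers `0 ≤ m ≤ n` such that `C(n,m)` is not divisible by `k`,
i.e. the number of nonzero entries on row `n` of Pascal's triangle modulo `k`. -/
def rowCount (k n : ℕ) : ℕ :=
  ((Finset.range (n + 1)).filter fun m => ¬ k ∣ n.choose m).card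

/-- The number of borrows when subtracting `m` from `n` in base `b` (for `m ≤ n`):
the number of indices `i ≥ 0` with `m mod b^(i+1) > n mod b^(i+1)`. -/
def borrowCount (b n m : ℕ) : ℕ :=
  ((Finset.range (Nat.digits b n).length).filter fun i => n % b ^ (i + 1) < m % b ^ (i + 1)).card

/-- `A_n(β)`: the number of `0 ≤ m ≤ n` with exactly `β` borrows
when subtracting `m` from `n` in base `b`. -/
def borrowA (b n β : ℕ) : ℕ :=
  ((Finset.range (n + 1)).filter fun m => borrowCount b n m = β).card

/-- `B_n(β)` with respect to `L` digit positions: the number of `n < m ≤ b^L - 1` such that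
exactly `β` of the indices `0 ≤ i ≤ L - 1` satisfy `m mod b^(i+1) > n mod b^(i+1)`. -/
def borrowB (b L n β : ℕ) : ℕ :=
  ((Finset.Ioc n (b ^ L - 1)).filter fun m =>
    ((Finset.range L).filter fun i => n % b ^ (i + 1) < m % b ^ (i + 1)).card = β).card

/-- The base-`b` digit string of `n`, most significant digit first (empty for `n = 0`). -/
def wordOf (b n : ℕ) : List ℕ := (Nat.digits b n).reverse

/-- `|n|_w`: the number of occurrences of `w` as a contiguous subword of the
base-`b` digit string of `n`. -/
def subwordCount (b n : ℕ) (w : List ℕ) : ℕ :=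
  ((Finset.range ((wordOf b n).length + 1 - w.length)).filter fun s =>
    ((wordOf b n).drop s).take w.length = w).card

/-- `c(w_k ⋯ w_0)` for a word `w = [w_k, …, w_0]` (most significant letter first):
`(w_k/(w_k+1)) · (∏_{h=1}^{k−1} (b−w_{k−h})/(w_{k−h}+1)) · (b−w_0−1)/(w_0+1)`. -/
def cword (b : ℕ) (w : List ℕ) : ℚ :=
  ((w.getD 0 0 : ℚ) / ((w.getD 0 0 : ℚ) + 1)) *
    (∏ h ∈ Finset.Ico 1 (w.length - 1),
      ((b : ℚ) - (w.getD h 0 : ℚ)) / ((w.getD h 0 : ℚ) + 1)) *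
    (((b : ℚ) - (w.getD (w.length - 1) 0 : ℚ) - 1) / ((w.getD (w.length - 1) 0 : ℚ) + 1))

/-- The sum `Σ c(v)c(w)⋯c(z)` over all sets of pairwise nonoverlapping contiguous subwords
of `W` (identified by their position intervals: a pair `(s, len)` denotes the subword
occupying positions `s, …, s+len-1`) whose multiset of lengths equals `P`. -/
def nonoverlapSum (b : ℕ) (W : List ℕ) (P : Multiset ℕ) : ℚ :=
  ∑ S ∈ ((Finset.range W.length ×ˢ Finset.Icc 1 W.length).powerset.filter fun S =>
      Multiset.map Prod.snd S.val = P ∧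
      (∀ q ∈ S, q.1 + q.2 ≤ W.length) ∧
      (∀ q ∈ S, ∀ r ∈ S, q ≠ r → q.1 + q.2 ≤ r.1 ∨ r.1 + r.2 ≤ q.1)),
    ∏ q ∈ S, cword b ((W.drop q.1).take q.2)

/-!
By Kummer's theorem, the `p`-adic valuation of `C(n, m)` is the number of borrows in `n - m` in
base `p`, so `a_{p^α}(n)` is the sum of the first `α` coefficients of the polynomial
`G = ∑_{m ≤ n} X ^ (number of borrows)`. Reading the digits of `n` one at a time, `G` and its
companion `H`, the sum over those `m > n` with at most as many digits as `n`, are obtained by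
multiplying transfer matrices `!![d + 1, d; X * (p - d - 1), X * (p - d)]` of determinant `p * X`.
Hence `G(aUV) G(U) - G(aU) G(UV) = a (p X) ^ |U| H(V)`, which is divisible by `X ^ (|U| + 1)`.

Thus modulo `X ^ (k + 1)` prepending a letter `a` to a word `W` multiplies `G` by `G(aU) / G(U)`,
where `U` consists of the first `k` letters of `W`, and `G(W)` is a product of factors attached to
the suffixes of `W` truncated to length `k + 1`. The multiset of these truncated suffixes is
determined by the numbers of occurrences of the nonempty words of length at most `k + 1`.
-/

open Finset Polynomial

section TruncatedSuffixes

variable {A : Type*}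

/-- The multiset of nonempty suffixes of the word `W`, each cut down to its first `k` letters.
For `k ≥ 1`, its members of length `k` are the length-`k` subwords of `W`, counted with
multiplicity; its shorter members are the short suffixes of `W`. -/
def truncatedSuffixes (k : ℕ) (W : List A) : Multiset (List A) :=
  (Multiset.range W.length).map fun s => (W.drop s).take k

lemma truncatedSuffixes_cons (k : ℕ) (a : A) (W : List A) :
    truncatedSuffixes k (a :: W) = (a :: W).take k ::ₘ truncatedSuffixes k W := by
  simp only [truncatedSuffixes, List.length_cons, Multiset.range, Multiset.map_coe,
    Multiset.cons_coe, List.range_succ_eq_map, List.map_cons, List.map_map]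
  rfl

lemma map_take_truncatedSuffixes_succ (k : ℕ) (W : List A) :
    (truncatedSuffixes (k + 1) W).map (List.take k) = truncatedSuffixes k W := by
  simp [truncatedSuffixes, List.take_take]

lemma length_le_of_mem_truncatedSuffixes {k : ℕ} {W w : List A}
    (hw : w ∈ truncatedSuffixes k W) : w.length ≤ k := by
  obtain ⟨s, -, rfl⟩ := Multiset.mem_map.1 hw
  exact List.length_take_le _ _

lemma ne_nil_of_mem_truncatedSuffixes_succ {k : ℕ} {W w : List A}
    (hw : w ∈ truncatedSuffixes (k + 1) W) : w ≠ [] := by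
  obtain ⟨s, hs, rfl⟩ := Multiset.mem_map.1 hw
  simpa using Multiset.mem_range.1 hs

lemma subset_of_mem_truncatedSuffixes {k : ℕ} {W w : List A}
    (hw : w ∈ truncatedSuffixes k W) : w ⊆ W := by
  obtain ⟨s, -, rfl⟩ := Multiset.mem_map.1 hw
  exact fun _ hd => List.mem_of_mem_drop (List.mem_of_mem_take hd)

/-- A truncated suffix either has full length `k + 1` or is unchanged by `List.take k`. -/
lemma truncatedSuffixes_succ_add_map_take (k : ℕ) (W : List A) :
    truncatedSuffixes (k + 1) W +
        ((truncatedSuffixes (k + 1) W).filter (·.length = k + 1)).map (List.take k) =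
      (truncatedSuffixes (k + 1) W).filter (·.length = k + 1) + truncatedSuffixes k W := by
  have map_take_short :
      ((truncatedSuffixes (k + 1) W).filter (¬ ·.length = k + 1)).map (List.take k) =
        (truncatedSuffixes (k + 1) W).filter (¬ ·.length = k + 1) := by
    refine (Multiset.map_congr rfl fun w hw => ?_).trans (Multiset.map_id' _)
    obtain ⟨hmem, hne⟩ := Multiset.mem_filter.1 hw
    exact List.take_of_length_le (by have := length_le_of_mem_truncatedSuffixes hmem; omega)
  have split := Multiset.filter_add_not (·.length = k + 1) (truncatedSuffixes (k + 1) W)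
  have split_map := congrArg (Multiset.map (List.take k)) split
  rw [Multiset.map_add, map_take_short, map_take_truncatedSuffixes_succ] at split_map
  conv_lhs => rw [← split]
  rw [← split_map, add_assoc, split, add_comm (Multiset.filter _ _) (Multiset.map _ _)]

variable [DecidableEq A]

lemma filter_length_truncatedSuffixes_eq {k : ℕ} {W W' : List A}
    (h : ∀ w : List A, w.length = k →
      (truncatedSuffixes k W).count w = (truncatedSuffixes k W').count w) :
    (truncatedSuffixes k W).filter (·.length = k) =
      (truncatedSuffixes k W').filter (·.length = k) := by
  ext w
  simp only [Multiset.count_filter]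
  split_ifs with hw
  exacts [h w hw, rfl]

theorem truncatedSuffixes_succ_eq_of_count_eq {k : ℕ} {W W' : List A}
    (h : ∀ w : List A, w ≠ [] → w.length ≤ k + 1 →
      (truncatedSuffixes w.length W).count w = (truncatedSuffixes w.length W').count w) :
    truncatedSuffixes (k + 1) W = truncatedSuffixes (k + 1) W' := by
  have windows_eq : (truncatedSuffixes (k + 1) W).filter (·.length = k + 1) =
      (truncatedSuffixes (k + 1) W').filter (·.length = k + 1) :=
    filter_length_truncatedSuffixes_eq fun w hw =>
      hw ▸ h w (List.ne_nil_of_length_eq_add_one hw) hw.le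
  induction k with
  | zero =>
    have filter_eq_self (V : List A) :
        (truncatedSuffixes 1 V).filter (·.length = 1) = truncatedSuffixes 1 V :=
      Multiset.filter_eq_self.2 fun w hw =>
        le_antisymm (length_le_of_mem_truncatedSuffixes hw)
          (List.length_pos_iff.2 (ne_nil_of_mem_truncatedSuffixes_succ hw))
    rwa [zero_add, filter_eq_self, filter_eq_self] at windows_eq
  | succ k ih =>
    have shorter_eq : truncatedSuffixes (k + 1) W = truncatedSuffixes (k + 1) W' :=
      ih (fun w hne hw => h w hne (by omega)) <| filter_length_truncatedSuffixes_eq fun w hw =>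
        hw ▸ h w (List.ne_nil_of_length_eq_add_one hw) (by omega)
    have key := truncatedSuffixes_succ_add_map_take (k + 1) W
    rw [windows_eq, shorter_eq, ← truncatedSuffixes_succ_add_map_take (k + 1) W'] at key
    exact add_right_cancel key

end TruncatedSuffixes

section SubwordCount

lemma subwordCount_eq_count {w : List ℕ} (hw : w ≠ []) (b n : ℕ) :
    subwordCount b n w = (truncatedSuffixes w.length (wordOf b n)).count w := by
  have w_pos : 0 < w.length := List.length_pos_iff.2 hw
  rw [truncatedSuffixes, Multiset.count_map, subwordCount]
  change _ = #{s ∈ range (wordOf b n).length | w = ((wordOf b n).drop s).take w.length}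
  congr 1
  ext s
  simp only [mem_filter, mem_range, eq_comm (a := w)]
  refine and_congr_left fun hs => ?_
  have := congrArg List.length hs
  rw [List.length_take, List.length_drop] at this
  omega

lemma lt_of_mem_wordOf {b : ℕ} (hb : 1 < b) {n d : ℕ} (hd : d ∈ wordOf b n) : d < b :=
  Nat.digits_lt_base hb (List.mem_reverse.1 hd)

lemma subwordCount_eq_zero {b : ℕ} (hb : 1 < b) (n : ℕ) {w : List ℕ} (hw : ¬ ∀ d ∈ w, d < b) :
    subwordCount b n w = 0 := by
  have w_ne_nil : w ≠ [] := by
    rintro rfl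
    simp at hw
  rw [subwordCount_eq_count w_ne_nil]
  exact Multiset.count_eq_zero_of_notMem fun hmem =>
    hw fun d hd => lt_of_mem_wordOf hb (subset_of_mem_truncatedSuffixes hmem hd)

lemma truncatedSuffixes_wordOf_eq {b : ℕ} (hb : 1 < b) {k m n : ℕ}
    (h : ∀ w : List ℕ, w ≠ [] → w.length ≤ k + 1 → (∀ d ∈ w, d < b) →
      subwordCount b m w = subwordCount b n w) :
    truncatedSuffixes (k + 1) (wordOf b m) = truncatedSuffixes (k + 1) (wordOf b n) := by
  refine truncatedSuffixes_succ_eq_of_count_eq fun w hne hlen => ?_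
  rw [← subwordCount_eq_count hne, ← subwordCount_eq_count hne]
  by_cases hw : ∀ d ∈ w, d < b
  · exact h w hne hlen hw
  · rw [subwordCount_eq_zero hb m hw, subwordCount_eq_zero hb n hw]

end SubwordCount

section TransferPolynomials

mutual

/-- For a base-`b` word `W` (most significant digit first) of length `L` and value `n`, the
generating polynomial `∑ X ^ (number of borrows in n - m)` over the `m < b ^ L` for which no borrow
leaves the top position, i.e. `m ≤ n`. It is defined through its recursion in the leading digit;
`noBorrowPoly_eq_sum_and_borrowPoly_eq_sum` identifies it with the sum. -/
noncomputable def noBorrowPoly (b : ℕ) : List ℕ → ℤ[X]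
  | [] => 1
  | d :: W => (d : ℤ[X]) * (noBorrowPoly b W + borrowPoly b W) + noBorrowPoly b W

/-- The companion of `noBorrowPoly` over the `m < b ^ L` for which a borrow leaves the top
position, i.e. `n < m`. -/
noncomputable def borrowPoly (b : ℕ) : List ℕ → ℤ[X]
  | [] => 0
  | d :: W =>
    X * (((b : ℤ[X]) - ((d : ℤ[X]) + 1)) * (noBorrowPoly b W + borrowPoly b W) + borrowPoly b W)

end

lemma X_dvd_borrowPoly (b : ℕ) (W : List ℕ) : X ∣ borrowPoly b W := by
  cases W with
  | nil => simp [borrowPoly]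
  | cons d W => exact ⟨_, by rw [borrowPoly]⟩

lemma not_X_dvd_noBorrowPoly (b : ℕ) (W : List ℕ) : ¬ X ∣ noBorrowPoly b W := by
  induction W with
  | nil => simp [noBorrowPoly, X_dvd_iff]
  | cons d W ih =>
    have borrow_zero := X_dvd_iff.1 (X_dvd_borrowPoly b W)
    rw [X_dvd_iff] at ih ⊢
    have coeff_zero : (noBorrowPoly b (d :: W)).coeff 0 =
        (d + 1 : ℤ) * (noBorrowPoly b W).coeff 0 := by
      simp [noBorrowPoly, mul_coeff_zero, borrow_zero, add_mul]
    rw [coeff_zero]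
    exact mul_ne_zero (by positivity) ih

/-- With `M` the product of the transfer matrices of the letters of `U`, `e = (1, 0)` and
`v = (noBorrowPoly b V, borrowPoly b V)`, this is `det (M e, M v) = det M * det (e, v)`. -/
lemma borrowPoly_append_mul_sub (b : ℕ) (U V : List ℕ) :
    borrowPoly b (U ++ V) * noBorrowPoly b U - borrowPoly b U * noBorrowPoly b (U ++ V) =
      (X * (b : ℤ[X])) ^ U.length * borrowPoly b V := by
  induction U with
  | nil => simp [noBorrowPoly, borrowPoly]
  | cons d U ih =>
    simp only [List.cons_append, noBorrowPoly, borrowPoly, List.length_cons, pow_succ]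
    linear_combination (X * (b : ℤ[X])) * ih

lemma noBorrowPoly_cons_append_mul_sub (b a : ℕ) (U V : List ℕ) :
    noBorrowPoly b (a :: (U ++ V)) * noBorrowPoly b U -
        noBorrowPoly b (a :: U) * noBorrowPoly b (U ++ V) =
      (a : ℤ[X]) * ((X * (b : ℤ[X])) ^ U.length * borrowPoly b V) := by
  rw [← borrowPoly_append_mul_sub, noBorrowPoly, noBorrowPoly]
  ring

lemma X_pow_dvd_noBorrowPoly_cons_mul_sub (b a k : ℕ) (W : List ℕ) :
    X ^ (k + 1) ∣ noBorrowPoly b (a :: W) * noBorrowPoly b (W.take k) -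
      noBorrowPoly b (a :: W.take k) * noBorrowPoly b W := by
  rcases le_total W.length k with hWk | hkW
  · simp [List.take_of_length_le hWk]
  · have key := noBorrowPoly_cons_append_mul_sub b a (W.take k) (W.drop k)
    rw [List.take_append_drop, List.length_take_of_le hkW] at key
    rw [key, pow_succ, mul_pow]
    exact (mul_dvd_mul (Dvd.intro _ rfl) (X_dvd_borrowPoly b _)).mul_left _

lemma X_pow_dvd_noBorrowPoly_mul_prod_sub (b k : ℕ) (W : List ℕ) :
    X ^ (k + 1) ∣
      noBorrowPoly b W * ((truncatedSuffixes (k + 1) W).map fun w => noBorrowPoly b w.tail).prod -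
        ((truncatedSuffixes (k + 1) W).map (noBorrowPoly b)).prod := by
  induction W with
  | nil => simp [truncatedSuffixes, noBorrowPoly]
  | cons a W ih =>
    simp only [truncatedSuffixes_cons, Multiset.map_cons, Multiset.prod_cons, List.take_succ_cons,
      List.tail_cons]
    obtain ⟨r, hr⟩ := X_pow_dvd_noBorrowPoly_cons_mul_sub b a k W
    obtain ⟨s, hs⟩ := ih
    refine ⟨r * ((truncatedSuffixes (k + 1) W).map fun w => noBorrowPoly b w.tail).prod +
      noBorrowPoly b (a :: W.take k) * s, ?_⟩
    linear_combination
      ((truncatedSuffixes (k + 1) W).map fun w => noBorrowPoly b w.tail).prod * hr +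
        noBorrowPoly b (a :: W.take k) * hs

theorem X_pow_dvd_noBorrowPoly_sub (b : ℕ) {k : ℕ} {W W' : List ℕ}
    (h : truncatedSuffixes (k + 1) W = truncatedSuffixes (k + 1) W') :
    X ^ (k + 1) ∣ noBorrowPoly b W - noBorrowPoly b W' := by
  have not_dvd_prod :
      ¬ X ∣ ((truncatedSuffixes (k + 1) W).map fun w => noBorrowPoly b w.tail).prod := by
    intro hdvd
    obtain ⟨w, -, hw⟩ := prime_X.exists_mem_multiset_map_dvd hdvd
    exact not_X_dvd_noBorrowPoly b _ hw
  refine prime_X.pow_dvd_of_dvd_mul_right _ not_dvd_prod ?_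
  have hW' := X_pow_dvd_noBorrowPoly_mul_prod_sub b k W'
  rw [← h] at hW'
  simpa only [sub_sub_sub_cancel_right, ← sub_mul] using
    dvd_sub (X_pow_dvd_noBorrowPoly_mul_prod_sub b k W) hW'

end TransferPolynomials

section Borrows

/-- The number of borrows out of the lowest `L` positions when subtracting `m` from `n` in base `b`.
The `i`-th position from the right, counting from `1`, borrows exactly when
`n % b ^ i < m % b ^ i`. -/
def borrows (b L n m : ℕ) : ℕ :=
  #{i ∈ Ico 1 (L + 1) | n % b ^ i < m % b ^ i}

variable {b L : ℕ}

lemma borrows_succ (b L n m : ℕ) :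
    borrows b (L + 1) n m =
      borrows b L n m + if n % b ^ (L + 1) < m % b ^ (L + 1) then 1 else 0 := by
  simp only [borrows, card_filter]
  exact sum_Ico_succ_top (by omega) _

lemma borrows_succ_of_le {n m : ℕ} (hmn : m ≤ n) (hn : n < b ^ (L + 1)) :
    borrows b (L + 1) n m = borrows b L n m := by
  rw [borrows_succ, Nat.mod_eq_of_lt hn, Nat.mod_eq_of_lt (hmn.trans_lt hn), if_neg hmn.not_gt,
    add_zero]

lemma borrows_succ_of_lt {n m : ℕ} (hnm : n < m) (hm : m < b ^ (L + 1)) :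
    borrows b (L + 1) n m = borrows b L n m + 1 := by
  rw [borrows_succ, Nat.mod_eq_of_lt hm, Nat.mod_eq_of_lt (hnm.trans hm), if_pos hnm]

lemma borrows_pow_mul_add (b L d e n m : ℕ) :
    borrows b L (b ^ L * d + n) (b ^ L * e + m) = borrows b L n m := by
  refine congrArg card (filter_congr fun i hi => ?_)
  have mod_eq (c r : ℕ) : (b ^ L * c + r) % b ^ i = r % b ^ i := by
    obtain ⟨q, hq⟩ : b ^ i ∣ b ^ L := pow_dvd_pow b (by rw [mem_Ico] at hi; omega)
    rw [hq, mul_assoc, Nat.mul_add_mod]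
  rw [mod_eq, mod_eq]

lemma sum_Ico_mul {M : Type*} [AddCommMonoid M] (f : ℕ → M) (q : ℕ) {c d : ℕ} (hcd : c ≤ d) :
    ∑ m ∈ Ico (q * c) (q * d), f m = ∑ e ∈ Ico c d, ∑ m ∈ range q, f (q * e + m) := by
  induction d, hcd using Nat.le_induction with
  | base => simp
  | succ d hcd ih =>
    rw [sum_Ico_succ_top hcd, ← ih, ← sum_Ico_consecutive f (Nat.mul_le_mul_left q hcd)
      (Nat.mul_le_mul_left q d.le_succ), sum_Ico_eq_sum_range f (q * d), Nat.mul_succ,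
      Nat.add_sub_cancel_left]

lemma pow_mul_add_lt_pow_succ {d n : ℕ} (hd : d < b) (hn : n < b ^ L) :
    b ^ L * d + n < b ^ (L + 1) := by
  have := Nat.mul_le_mul_left (b ^ L) (Nat.succ_le_of_lt hd)
  rw [pow_succ]
  rw [Nat.mul_succ] at this
  omega

section CommSemiring

variable {R : Type*} [CommSemiring R]

/-- The blocks `b ^ L * e + [0, b ^ L)` with `e < d` are complete; the block `e = d` is cut
at `n`. -/
lemma sum_range_pow_borrows_succ (x : R) {d n : ℕ} (hd : d < b) (hn : n < b ^ L) :
    ∑ m ∈ range (b ^ L * d + n + 1), x ^ borrows b (L + 1) (b ^ L * d + n) m =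
      d * ∑ m ∈ range (b ^ L), x ^ borrows b L n m +
        ∑ m ∈ range (n + 1), x ^ borrows b L n m := by
  have no_top_borrow : ∀ m ∈ range (b ^ L * d + n + 1),
      x ^ borrows b (L + 1) (b ^ L * d + n) m = x ^ borrows b L (b ^ L * d + n) m :=
    fun m hm => by
      rw [borrows_succ_of_le (Nat.lt_succ_iff.1 (mem_range.1 hm)) (pow_mul_add_lt_pow_succ hd hn)]
  have full_blocks := sum_Ico_mul (fun m => x ^ borrows b L (b ^ L * d + n) m) (b ^ L) d.zero_le
  rw [mul_zero, ← range_eq_Ico, ← range_eq_Ico] at full_blocks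
  rw [sum_congr rfl no_top_borrow, add_assoc, sum_range_add, full_blocks]
  simp only [borrows_pow_mul_add, sum_const, card_range, nsmul_eq_mul]

lemma sum_Ico_pow_borrows_succ (x : R) {d n : ℕ} (hd : d < b) (hn : n < b ^ L) :
    ∑ m ∈ Ico (b ^ L * d + n + 1) (b ^ (L + 1)), x ^ borrows b (L + 1) (b ^ L * d + n) m =
      x * ((b - (d + 1) : ℕ) * ∑ m ∈ range (b ^ L), x ^ borrows b L n m +
        ∑ m ∈ Ico (n + 1) (b ^ L), x ^ borrows b L n m) := by
  have top_borrow : ∀ m ∈ Ico (b ^ L * d + n + 1) (b ^ (L + 1)),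
      x ^ borrows b (L + 1) (b ^ L * d + n) m = x * x ^ borrows b L (b ^ L * d + n) m :=
    fun m hm => by
      rw [mem_Ico] at hm
      rw [borrows_succ_of_lt hm.1 hm.2, pow_succ']
  have full_blocks := sum_Ico_mul (fun m => x ^ borrows b L (b ^ L * d + n) m) (b ^ L)
    (Nat.succ_le_of_lt hd)
  have partial_block := sum_Ico_add (fun m => x ^ borrows b L (b ^ L * d + n) m) (n + 1) (b ^ L)
    (b ^ L * d)
  simp only [borrows_pow_mul_add] at full_blocks partial_block
  rw [sum_congr rfl top_borrow, ← mul_sum, pow_succ, ← sum_Ico_consecutive _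
    (show b ^ L * d + n + 1 ≤ b ^ L * (d + 1) by rw [mul_add_one]; omega)
    (Nat.mul_le_mul_left _ (Nat.succ_le_of_lt hd)), full_blocks, partial_block]
  simp only [sum_const, Nat.card_Ico, nsmul_eq_mul]
  rw [add_comm (n + 1), add_comm (b ^ L) (b ^ L * d), mul_add_one, ← add_assoc, add_comm]

end CommSemiring

lemma noBorrowPoly_eq_sum_and_borrowPoly_eq_sum (hb : 1 < b) {W : List ℕ} (hW : ∀ d ∈ W, d < b) :
    noBorrowPoly b W = ∑ m ∈ range (Nat.ofDigits b W.reverse + 1),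
        X ^ borrows b W.length (Nat.ofDigits b W.reverse) m ∧
      borrowPoly b W = ∑ m ∈ Ico (Nat.ofDigits b W.reverse + 1) (b ^ W.length),
        X ^ borrows b W.length (Nat.ofDigits b W.reverse) m := by
  induction W with
  | nil => simp [noBorrowPoly, borrowPoly, borrows]
  | cons d W ih =>
    obtain ⟨hd, hW⟩ := List.forall_mem_cons.1 hW
    obtain ⟨ih_noBorrow, ih_borrow⟩ := ih hW
    have value_lt : Nat.ofDigits b W.reverse < b ^ W.length := by
      simpa using Nat.ofDigits_lt_base_pow_length hb (l := W.reverse) (by simpa using hW)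
    have sum_all : noBorrowPoly b W + borrowPoly b W =
        ∑ m ∈ range (b ^ W.length), X ^ borrows b W.length (Nat.ofDigits b W.reverse) m := by
      rw [ih_noBorrow, ih_borrow, sum_range_add_sum_Ico _ value_lt]
    rw [Nat.ofDigits_reverse_cons, add_comm (Nat.ofDigits _ _), List.length_cons,
      sum_range_pow_borrows_succ X hd value_lt, sum_Ico_pow_borrows_succ X hd value_lt,
      noBorrowPoly, borrowPoly, sum_all, ← ih_noBorrow, ← ih_borrow, Nat.cast_sub hd]
    push_cast
    exact ⟨rfl, rfl⟩

lemma noBorrowPoly_wordOf (hb : 1 < b) (n : ℕ) :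
    noBorrowPoly b (wordOf b n) =
      ∑ m ∈ range (n + 1), X ^ borrows b (wordOf b n).length n m := by
  have h := (noBorrowPoly_eq_sum_and_borrowPoly_eq_sum hb fun _ => lt_of_mem_wordOf (n := n) hb).1
  rwa [show Nat.ofDigits b (wordOf b n).reverse = n by
    rw [wordOf, List.reverse_reverse, Nat.ofDigits_digits]] at h

end Borrows

section Kummer

variable {p : ℕ}

lemma le_mod_add_sub_mod_iff {q m n : ℕ} (hq : 0 < q) (hmn : m ≤ n) :
    q ≤ m % q + (n - m) % q ↔ n % q < m % q := by
  obtain ⟨j, rfl⟩ := Nat.exists_eq_add_of_le hmn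
  rw [Nat.add_sub_cancel_left]
  have j_lt := Nat.mod_lt j hq
  rcases le_or_gt q (m % q + j % q) with carry | no_carry
  · have := Nat.add_mod_add_of_le_add_mod carry
    omega
  · have := Nat.add_mod_of_add_mod_lt no_carry
    omega

lemma padicValNat_choose_eq_borrows (hp : p.Prime) {L m n : ℕ} (hn : n < p ^ L) (hmn : m ≤ n) :
    padicValNat p (n.choose m) = borrows p L n m := by
  have := Fact.mk hp
  have log_lt : Nat.log p n < L + 1 :=
    Nat.log_lt_of_lt_pow' L.succ_ne_zero (hn.trans (Nat.pow_lt_pow_succ hp.one_lt))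
  rw [padicValNat_choose hmn log_lt, borrows]
  simp only [le_mod_add_sub_mod_iff (pow_pos hp.pos _) hmn]

lemma rowCount_pow_eq_sum_coeff (hp : p.Prime) (α n : ℕ) :
    (rowCount (p ^ α) n : ℤ) = ∑ j ∈ range α, (noBorrowPoly p (wordOf p n)).coeff j := by
  have := Fact.mk hp
  have n_lt : n < p ^ (wordOf p n).length := by
    simpa [wordOf] using Nat.lt_base_pow_length_digits hp.one_lt
  have not_dvd_iff : ∀ m ∈ range (n + 1),
      ¬ p ^ α ∣ n.choose m ↔ borrows p (wordOf p n).length n m < α := fun m hm => by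
    have hmn := Nat.lt_succ_iff.1 (mem_range.1 hm)
    rw [padicValNat_dvd_iff_le (Nat.choose_ne_zero hmn), padicValNat_choose_eq_borrows hp n_lt hmn,
      not_le]
  rw [noBorrowPoly_wordOf hp.one_lt, rowCount, filter_congr not_dvd_iff]
  simp only [finsetSum_coeff, coeff_X_pow]
  rw [sum_comm]
  simp only [sum_ite_eq', mem_range, sum_boole]

theorem rowCount_pow_eq_of_subwordCount_eq (hp : p.Prime) {α m n : ℕ}
    (h : ∀ w : List ℕ, w ≠ [] → w.length ≤ α → (∀ d ∈ w, d < p) →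
      subwordCount p m w = subwordCount p n w) :
    rowCount (p ^ α) m = rowCount (p ^ α) n := by
  zify
  rw [rowCount_pow_eq_sum_coeff hp, rowCount_pow_eq_sum_coeff hp]
  refine sum_congr rfl fun j hj => ?_
  obtain ⟨k, rfl⟩ := Nat.exists_eq_add_one_of_ne_zero (ne_zero_of_lt (mem_range.1 hj))
  have poly_congr :=
    X_pow_dvd_noBorrowPoly_sub p (truncatedSuffixes_wordOf_eq hp.one_lt h)
  rw [X_pow_dvd_iff] at poly_congr
  simpa only [coeff_sub, sub_eq_zero] using poly_congr j (mem_range.1 hj)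

end Kummer

/-- For a prime `p` and `α ≥ 1`: the ratio `a_{p^α}(n)/a_p(n)` depends only on the numbers of
occurrences of nonempty subwords of length at most `α` in the base-`p` representation of `n`.
That is, if `|m|_w = |n|_w` for every nonempty word `w` of length at most `α` over the digit
alphabet `{0, …, p−1}`, then `a_{p^α}(m) · a_p(n) = a_{p^α}(n) · a_p(m)`. -/
theorem stmt19 (p : ℕ) (hp : p.Prime) (α : ℕ) (hα : 1 ≤ α) (m n : ℕ)
    (h : ∀ w : List ℕ, w ≠ [] → w.length ≤ α → (∀ d ∈ w, d < p) →
      subwordCount p m w = subwordCount p n w) :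
    rowCount (p ^ α) m * rowCount p n = rowCount (p ^ α) n * rowCount p m := by
  have pow_eq := rowCount_pow_eq_of_subwordCount_eq hp h
  have base_eq := rowCount_pow_eq_of_subwordCount_eq hp (α := 1)
    fun w hne hlen => h w hne (hlen.trans hα)
  rw [pow_one] at base_eq
  rw [pow_eq, base_eq]
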